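/- arXiv:2409.00891 — 2 statements merged into one kernel-verified Lean document; each statement's English description precedes it below -/
import Mathlib

section
/- Let p ≥ 3 be a prime number, let a be an integer with a² ≤ 4p and a ≡ 1 (mod p), and let u be a unit of the ring ℤ_p of p-adic integers satisfying u² − a·u + p = 0. Then the p-adic valuation of 1 − u is exactly 1 (equivalently, p divides 1 − u but p² does not divide 1 − u in ℤ_p). -/
/-- Let `p ≥ 3` be a prime, `a` an integer with `a² ≤ 4p` and
`a ≡ 1 (mod p)`, and `u` a unit of `ℤ_p` with `u² − a·u + p = 0`. Then the `p`-adic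
valuation of `1 − u` is exactly `1`: `p ∣ 1 − u` but `p² ∤ 1 − u` in `ℤ_p`. -/
theorem ord_one_sub_frobenius_eigenvalue_eq_one
    (p : ℕ) [Fact p.Prime] (hp3 : 3 ≤ p)
    (a : ℤ) (hHasse : a ^ 2 ≤ 4 * (p : ℤ)) (hanom : (p : ℤ) ∣ a - 1)
    (u : ℤ_[p]) (hu : IsUnit u) (heq : u ^ 2 - (a : ℤ_[p]) * u + (p : ℤ_[p]) = 0) :
    (p : ℤ_[p]) ∣ 1 - u ∧ ¬ (p : ℤ_[p]) ^ 2 ∣ 1 - u := by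
  obtain ⟨k, hk⟩ := hanom
  have ha : a = 1 + p * k := by linarith
  subst ha
  push_cast at heq
  have hp0 : (p : ℤ_[p]) ≠ 0 := by
    exact_mod_cast (by omega : p ≠ 0)
  have h1 : (1 - u) * u = p * (1 - k * u) := by linear_combination -heq
  have hd : (p : ℤ_[p]) ∣ 1 - u := by
    have : (p : ℤ_[p]) ∣ (1 - u) * u := ⟨_, h1⟩
    exact (hu.dvd_mul_right).1 this
  refine ⟨hd, ?_⟩
  rintro ⟨c, hc⟩
  have h2 : (1 - k * u : ℤ_[p]) = p * (c * u) := by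
    apply mul_left_cancel₀ hp0
    rw [← h1, hc]
    ring
  obtain ⟨d, hd⟩ := hd
  have h3 : (p : ℤ_[p]) ^ 1 ∣ ((k - 1 : ℤ) : ℤ_[p]) := by
    refine ⟨k * d - c * u, ?_⟩
    push_cast
    linear_combination k * hd - h2
  have h4 := (PadicInt.pow_p_dvd_int_iff 1 (k - 1)).1 h3
  obtain ⟨m, hm⟩ := h4
  have hk' : k = 1 + p * m := by
    push_cast at hm
    linarith
  have hp : (3 : ℤ) ≤ p := by exact_mod_cast hp3
  generalize (p : ℤ) = q at *
  have hk2 : k = 1 ∨ 2 ≤ k ∨ k ≤ -2 := by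
    rcases lt_trichotomy m 0 with h | h | h
    · right; right; nlinarith
    · left; simp [hk', h]
    · right; left; nlinarith
  rcases hk2 with h | h | h
  · subst h
    nlinarith
  · have : 1 + q * 2 ≤ 1 + q * k := by nlinarith
    nlinarith
  · have : 1 + q * k ≤ 1 - q * 2 := by nlinarith
    nlinarith
end

section
/- Let p be a prime and c a natural number. Suppose that for every n ∈ ℕ we are given an abelian group G_n and a subgroup F_n ⊆ G_n with p^c · G_n ⊆ F_n, and for every n ≥ 1 a group homomorphism ν_n : G_n → G_{n−1} satisfying ν_n(F_n) ⊆ F_{n−1} and ν_n(G_n) ⊆ p·G_{n−1} + F_{n−1} (i.e., the induced map G_n/F_n → G_{n−1}/F_{n−1} has image in p·(G_{n−1}/F_{n−1})). Then the two intersections of images in G_0 coincide: ⋂_{n≥0} (ν_1 ∘ ⋯ ∘ ν_n)(G_n) = ⋂_{n≥0} (ν_1 ∘ ⋯ ∘ ν_n)(F_n), where the n = 0 terms are G_0 and F_0 respectively. -/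
/-- The composite `ν₁ ∘ ⋯ ∘ νₙ : G n →+ G 0` of a tower of norm maps
`ν (n) : G (n+1) →+ G n`; for `n = 0` it is the identity of `G 0`. -/
def normComp {G : ℕ → Type*} [∀ n, AddCommGroup (G n)]
    (ν : ∀ n, G (n + 1) →+ G n) : ∀ n, G n →+ G 0
  | 0 => AddMonoidHom.id (G 0)
  | n + 1 => (normComp ν n).comp (ν n)

/-- An element coming from `k` levels above `n` comes from `p ^ k • G n + F n`. -/
theorem exists_descend (p : ℕ)
    (G : ℕ → Type*) [∀ n, AddCommGroup (G n)]
    (F : ∀ n, AddSubgroup (G n))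
    (ν : ∀ n, G (n + 1) →+ G n)
    (hνF : ∀ n, ∀ x ∈ F (n + 1), ν n x ∈ F n)
    (hνG : ∀ n (x : G (n + 1)), ∃ y : G n, ∃ f ∈ F n, ν n x = p • y + f) (m : ℕ) (z : G m)
    (k : ℕ) : ∀ n, m = n + k → ∃ y : G n, ∃ f ∈ F n,
      normComp ν n (p ^ k • y + f) = normComp ν m z := by
  induction k with
  | zero =>
    rintro n h
    obtain rfl : m = n := h
    exact ⟨z, 0, (F m).zero_mem, by simp⟩
  | succ k ih =>
    intro n h
    obtain ⟨y, f, hf, e⟩ := ih (n + 1) (by omega)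
    obtain ⟨y', f', hf', e'⟩ := hνG n y
    refine ⟨y', p ^ k • f' + ν n f,
      (F n).add_mem ((F n).nsmul_mem hf' _) (hνF n f hf), ?_⟩
    rw [← e]
    change _ = normComp ν n (ν n (p ^ k • y + f))
    rw [map_add (ν n), map_nsmul (ν n), e', nsmul_add, pow_succ, mul_nsmul', add_assoc]

/-- Let `p` be a prime and `c` a natural number. Suppose for every `n`
we have an abelian group `G n` and a subgroup `F n ⊆ G n` with `p^c · G n ⊆ F n`, and
for every `n` a homomorphism `ν n : G (n+1) → G n` satisfying `ν n (F (n+1)) ⊆ F n` and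
`ν n (G (n+1)) ⊆ p · G n + F n`. Then
`⋂ₙ (ν₁ ∘ ⋯ ∘ νₙ)(G n) = ⋂ₙ (ν₁ ∘ ⋯ ∘ νₙ)(F n)` in `G 0`. -/
theorem iInter_image_eq_of_norm_tower
    (p c : ℕ) (hp : p.Prime)
    (G : ℕ → Type*) [∀ n, AddCommGroup (G n)]
    (F : ∀ n, AddSubgroup (G n))
    (hF : ∀ n (x : G n), p ^ c • x ∈ F n)
    (ν : ∀ n, G (n + 1) →+ G n)
    (hνF : ∀ n, ∀ x ∈ F (n + 1), ν n x ∈ F n)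
    (hνG : ∀ n (x : G (n + 1)), ∃ y : G n, ∃ f ∈ F n, ν n x = p • y + f) :
    (⋂ n, Set.range (normComp ν n)) = ⋂ n, (normComp ν n) '' (F n : Set (G n)) := by
  apply Set.Subset.antisymm
  · intro x hx
    rw [Set.mem_iInter] at hx ⊢
    intro n
    obtain ⟨z, rfl⟩ := hx (n + c)
    obtain ⟨y, f, hf, e⟩ := exists_descend p G F ν hνF hνG (n + c) z c n rfl
    exact ⟨_, (F n).add_mem (hF n y) hf, e⟩
  · exact Set.iInter_mono fun n => Set.image_subset_range _ _
end
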